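/- There exists an absolute constant C > 0 (one may take C = e^{3e²}) such that the following holds. Let G = (V,E) be a finite simple graph on n vertices with maximum degree at most Δ, where Δ ≥ 3 is an integer, and let μ be the hardcore model on G with fugacities satisfying λ_v ≤ λ_Δ for all v. Let ν_0 be any probability distribution on 2^V supported on independent sets of G, and let ν = ν_0 P^{SS} be the distribution after one pass of the systematic scan for μ (with respect to any fixed enumeration of V). Then for every vertex v ∈ V and every independent set σ⁻ ⊆ V with v ∉ σ⁻, writing σ⁺ = σ⁻ ∪ {v}, one has ν(σ⁺) ≤ C·λ_v·ν(σ⁻). -/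

import Mathlib

/-!
The bound already holds step by step along the scan. A single-site update at `w` has the closed form
`ρ'(y) = W(y) / (W(y ∪ w) + W(y \ w)) * (ρ(y ∪ w) + ρ(y \ w))` (`step_eq`), with `W` the
unnormalized hardcore weight; in particular `ρ'` is supported on independent sets.

Right after the update at `v`, this formula gives `ρ(y ∪ v) ≤ λ_v ρ(y)` for every `y ∌ v`
(`step_self`), since `W(y ∪ v) ≤ λ_v W(y)`. Every later update, at some `w ≠ v`, preserves an
inequality `ρ(y ∪ v) ≤ c ρ(y)` (`step_other`): if `w` is not adjacent to `v`, the conditional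
probabilities at `w` given `y ∪ v` and given `y` coincide, and if `w` is adjacent to `v`, then `w` is
forced to be unoccupied given `y ∪ v`, whereas it is unoccupied given `y` with probability at least
`1 / (1 + λ_w)`, so `c` grows by a factor of at most `1 + λ_w`. The total loss is
`∏_{w ∼ v} (1 + λ_w) ≤ (1 + λ_Δ)^Δ ≤ exp (Δ λ_Δ) ≤ exp (6 e)` (`mul_hcCrit_le`).
-/

open Finset

set_option linter.unusedSectionVars false

noncomputable section
attribute [local instance] Classical.propDecidable

/-- Push a distribution `ν` one step through a Markov transition matrix `P`. -/
def stepDist {Ω : Type*} [Fintype Ω] (ν : Ω → ℝ) (P : Ω → Ω → ℝ) : Ω → ℝ :=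
  fun y => ∑ x, ν x * P x y

variable {V : Type*} [Fintype V] [DecidableEq V]

/-- `σ` is an independent set of `G`: no two of its elements are adjacent. -/
def IndepSet (G : SimpleGraph V) (σ : Finset V) : Prop :=
  ∀ u ∈ σ, ∀ w ∈ σ, ¬ G.Adj u w

/-- Unnormalized hardcore weight of `σ`: `∏_{v ∈ σ} λ_v` if `σ` is independent, else `0`. -/
def hcWeight (G : SimpleGraph V) (lam : V → ℝ) (σ : Finset V) : ℝ :=
  if IndepSet G σ then ∏ v ∈ σ, lam v else 0

/-- The hardcore model on `G` with fugacities `lam`, as a distribution on `Finset V`. -/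
def hardcore (G : SimpleGraph V) (lam : V → ℝ) (σ : Finset V) : ℝ :=
  hcWeight G lam σ / ∑ τ : Finset V, hcWeight G lam τ

/-- The tree-uniqueness threshold `λ_Δ = (Δ−1)^{Δ−1}/(Δ−2)^Δ`. -/
def hcCrit (Δ : ℕ) : ℝ := ((Δ : ℝ) - 1) ^ (Δ - 1) / ((Δ : ℝ) - 2) ^ Δ

/-- Glauber single-site update at `v`: resample the membership of `v` from the
conditional distribution of `μ` given the configuration on `V ∖ {v}`. -/
def siteUpdate (μ : Finset V → ℝ) (v : V) (σ τ : Finset V) : ℝ :=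
  if τ.erase v = σ.erase v then
    μ τ / (μ (insert v (σ.erase v)) + μ (σ.erase v))
  else 0

/-- Push a distribution through the single-site updates along the list `l`
(one pass of the systematic scan when `l` enumerates `V`). -/
def scanDist (μ : Finset V → ℝ) (l : List V) (ν : Finset V → ℝ) : Finset V → ℝ :=
  l.foldl (fun ρ v => stepDist ρ (siteUpdate μ v)) ν

/-! ### Hardcore weights -/

lemma hcWeight_nonneg (G : SimpleGraph V) {lam : V → ℝ} (hl : ∀ v, 0 < lam v) (σ : Finset V) :
    0 ≤ hcWeight G lam σ := by
  unfold hcWeight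
  split_ifs
  · exact Finset.prod_nonneg fun v _ => (hl v).le
  · exact le_rfl

lemma IndepSet.subset {G : SimpleGraph V} {σ τ : Finset V} (h : IndepSet G τ) (hs : σ ⊆ τ) :
    IndepSet G σ := fun u hu w hw => h u (hs hu) w (hs hw)

lemma hcWeight_pos {G : SimpleGraph V} {lam : V → ℝ} (hl : ∀ v, 0 < lam v) {σ : Finset V}
    (h : IndepSet G σ) : 0 < hcWeight G lam σ := by
  unfold hcWeight
  rw [if_pos h]
  exact Finset.prod_pos fun v _ => hl v

lemma hcWeight_of_not {G : SimpleGraph V} {lam : V → ℝ} {σ : Finset V}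
    (h : ¬ IndepSet G σ) : hcWeight G lam σ = 0 := if_neg h

lemma hcWeight_insert {G : SimpleGraph V} {lam : V → ℝ} {v : V} {σ : Finset V} (hv : v ∉ σ)
    (h : IndepSet G (insert v σ)) : hcWeight G lam (insert v σ) = lam v * hcWeight G lam σ := by
  unfold hcWeight
  rw [if_pos h, if_pos (h.subset (Finset.subset_insert v σ)), Finset.prod_insert hv]

lemma hcWeight_insert_le (G : SimpleGraph V) {lam : V → ℝ} (hl : ∀ v, 0 < lam v) {v : V}
    {σ : Finset V} (hv : v ∉ σ) : hcWeight G lam (insert v σ) ≤ lam v * hcWeight G lam σ := by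
  by_cases h : IndepSet G (insert v σ)
  · exact (hcWeight_insert hv h).le
  · rw [hcWeight_of_not h]
    exact mul_nonneg (hl v).le (hcWeight_nonneg G hl σ)

/-! ### Single-site updates -/

/-- The conditional probability of `y` given its restriction to the complement of `w`. -/
def condProb (G : SimpleGraph V) (lam : V → ℝ) (w : V) (y : Finset V) : ℝ :=
  hcWeight G lam y / (hcWeight G lam (insert w y) + hcWeight G lam (y.erase w))

lemma condProb_nonneg (G : SimpleGraph V) {lam : V → ℝ} (hl : ∀ v, 0 < lam v) (w : V)
    (y : Finset V) : 0 ≤ condProb G lam w y :=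
  div_nonneg (hcWeight_nonneg G hl _)
    (add_nonneg (hcWeight_nonneg G hl _) (hcWeight_nonneg G hl _))

lemma condProb_of_not {G : SimpleGraph V} {lam : V → ℝ} {w : V} {y : Finset V}
    (h : ¬ IndepSet G y) : condProb G lam w y = 0 := by
  unfold condProb
  rw [hcWeight_of_not h, zero_div]

lemma siteUpdate_hardcore (G : SimpleGraph V) {lam : V → ℝ} (hl : ∀ v, 0 < lam v) (w : V)
    {x y : Finset V} (hxy : y.erase w = x.erase w) :
    siteUpdate (hardcore G lam) w x y = condProb G lam w y := by
  have hZ : 0 < ∑ τ : Finset V, hcWeight G lam τ :=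
    Finset.sum_pos' (fun τ _ => hcWeight_nonneg G hl τ)
      ⟨∅, Finset.mem_univ _, hcWeight_pos hl (by intro u hu; simp at hu)⟩
  have hins : insert w (y.erase w) = insert w y := by
    ext a
    simp only [Finset.mem_insert, Finset.mem_erase]
    tauto
  unfold siteUpdate condProb hardcore
  rw [if_pos hxy, ← hxy, hins, ← add_div, div_div_div_cancel_right₀ hZ.ne']

/-- Only the two configurations agreeing with `y` off `w` contribute to an update at `w`. -/
lemma step_eq (G : SimpleGraph V) {lam : V → ℝ} (hl : ∀ v, 0 < lam v) (w : V)
    (ρ : Finset V → ℝ) (y : Finset V) :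
    stepDist ρ (siteUpdate (hardcore G lam) w) y =
      condProb G lam w y * (ρ (insert w y) + ρ (y.erase w)) := by
  have hne : insert w y ≠ y.erase w := fun h => by
    have h1 : w ∈ insert w y := Finset.mem_insert_self w y
    rw [h] at h1
    simp at h1
  unfold stepDist
  rw [← Finset.sum_subset (Finset.subset_univ ({insert w y, y.erase w} : Finset (Finset V)))]
  · rw [Finset.sum_pair hne, siteUpdate_hardcore G hl w (by ext a; simp),
      siteUpdate_hardcore G hl w (by simp)]
    ring
  · intro x _ hx
    have hxy : ¬ (y.erase w = x.erase w) := by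
      intro h
      apply hx
      rw [Finset.mem_insert, Finset.mem_singleton]
      by_cases hw : w ∈ x
      · left
        ext a
        have := congrArg (fun s => a ∈ s) h
        simp only [Finset.mem_erase, eq_iff_iff] at this
        rw [Finset.mem_insert]
        by_cases ha : a = w
        · subst ha
          simp [hw]
        · tauto
      · right
        rw [h, Finset.erase_eq_of_notMem hw]
    unfold siteUpdate
    rw [if_neg hxy, mul_zero]

lemma step_nonneg (G : SimpleGraph V) {lam : V → ℝ} (hl : ∀ v, 0 < lam v) (w : V)
    {ρ : Finset V → ℝ} (hρ : ∀ y, 0 ≤ ρ y) (y : Finset V) :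
    0 ≤ stepDist ρ (siteUpdate (hardcore G lam) w) y := by
  rw [step_eq G hl]
  exact mul_nonneg (condProb_nonneg G hl w y) (add_nonneg (hρ _) (hρ _))

lemma step_self (G : SimpleGraph V) {lam : V → ℝ} (hl : ∀ v, 0 < lam v) (v : V)
    {ρ : Finset V → ℝ} (hρ : ∀ y, 0 ≤ ρ y) {y : Finset V} (hv : v ∉ y) :
    stepDist ρ (siteUpdate (hardcore G lam) v) (insert v y) ≤
      lam v * stepDist ρ (siteUpdate (hardcore G lam) v) y := by
  rw [step_eq G hl, step_eq G hl, Finset.insert_idem, Finset.erase_insert hv,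
    Finset.erase_eq_of_notMem hv, ← mul_assoc]
  refine mul_le_mul_of_nonneg_right ?_ (add_nonneg (hρ _) (hρ _))
  unfold condProb
  rw [Finset.insert_idem, Finset.erase_insert hv, Finset.erase_eq_of_notMem hv, ← mul_div_assoc]
  exact div_le_div_of_nonneg_right (hcWeight_insert_le G hl hv)
    (add_nonneg (hcWeight_nonneg G hl _) (hcWeight_nonneg G hl _))

/-- The factor by which an update at `w` can worsen the bound at `v`. -/
def loss (G : SimpleGraph V) (lam : V → ℝ) (v w : V) : ℝ :=
  if G.Adj v w then 1 + lam w else 1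

lemma one_le_loss (G : SimpleGraph V) {lam : V → ℝ} (hl : ∀ v, 0 < lam v) (v w : V) :
    1 ≤ loss G lam v w := by
  unfold loss
  split_ifs
  · linarith [hl w]
  · exact le_rfl

/-- Occupying `v` increases the conditional probability at another site `w` at most by the factor
`loss G lam v w`. -/
lemma condProb_insert_le (G : SimpleGraph V) {lam : V → ℝ} (hl : ∀ v, 0 < lam v) {v w : V}
    (hvw : w ≠ v) {y : Finset V} (hv : v ∉ y) :
    condProb G lam w (insert v y) ≤ loss G lam v w * condProb G lam w y := by
  by_cases hI : IndepSet G (insert v y)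
  swap
  · rw [condProb_of_not hI]
    exact mul_nonneg (zero_le_one.trans (one_le_loss G hl v w)) (condProb_nonneg G hl w y)
  have hIy : IndepSet G y := hI.subset (Finset.subset_insert v y)
  have hWy := hcWeight_pos hl hIy
  by_cases hadj : G.Adj v w
  · have hwy : w ∉ y := fun h =>
      hI v (Finset.mem_insert_self v y) w (Finset.mem_insert_of_mem h) hadj
    have hle1 : condProb G lam w (insert v y) ≤ 1 := by
      unfold condProb
      rw [Finset.erase_eq_of_notMem (s := insert v y) (by simp [hvw, hwy])]
      exact div_le_one_of_le₀ (le_add_of_nonneg_left (hcWeight_nonneg G hl _))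
        (add_nonneg (hcWeight_nonneg G hl _) (hcWeight_nonneg G hl _))
    refine hle1.trans ?_
    unfold condProb loss
    have hb := hcWeight_insert_le G hl hwy
    have h0 := hcWeight_nonneg G hl (insert w y)
    rw [if_pos hadj, Finset.erase_eq_of_notMem hwy, ← mul_div_assoc,
      le_div_iff₀ (by linarith)]
    linarith
  · have h1 : hcWeight G lam (insert w (insert v y)) = lam v * hcWeight G lam (insert w y) := by
      rw [Finset.insert_comm]
      by_cases hwI : IndepSet G (insert w y)
      · refine hcWeight_insert (by simp [hvw.symm, hv]) ?_
        intro a ha b hb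
        rw [Finset.mem_insert, Finset.mem_insert] at ha hb
        rcases ha with rfl | ha
        · rcases hb with rfl | rfl | hb
          · exact G.loopless.irrefl _
          · exact hadj
          · exact hI _ (by simp) _ (by simp [hb])
        · rcases hb with rfl | hb
          · rcases ha with rfl | ha
            · exact fun h => hadj h.symm
            · exact hI _ (by simp [ha]) _ (by simp)
          · exact hwI a (Finset.mem_insert.2 ha) b (Finset.mem_insert.2 hb)
      · rw [hcWeight_of_not hwI, mul_zero, hcWeight_of_not]
        exact fun h => hwI (h.subset (Finset.subset_insert _ _))
    have h2 : hcWeight G lam ((insert v y).erase w) = lam v * hcWeight G lam (y.erase w) := by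
      rw [Finset.erase_insert_of_ne hvw.symm]
      refine hcWeight_insert (by simp [hv]) (hI.subset ?_)
      exact Finset.insert_subset_insert v (Finset.erase_subset w y)
    unfold condProb loss
    rw [if_neg hadj, one_mul, h1, h2, hcWeight_insert hv hI, ← mul_add,
      mul_div_mul_left _ _ (hl v).ne']

lemma step_other (G : SimpleGraph V) {lam : V → ℝ} (hl : ∀ v, 0 < lam v) {v w : V}
    (hvw : w ≠ v) {ρ : Finset V → ℝ} (hρ : ∀ y, 0 ≤ ρ y) {c : ℝ}
    (hc : ∀ y, v ∉ y → ρ (insert v y) ≤ c * ρ y) {y : Finset V} (hv : v ∉ y) :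
    stepDist ρ (siteUpdate (hardcore G lam) w) (insert v y) ≤
      (loss G lam v w * c) * stepDist ρ (siteUpdate (hardcore G lam) w) y := by
  rw [step_eq G hl, step_eq G hl, Finset.insert_comm, Finset.erase_insert_of_ne hvw.symm]
  have h1 := hc (insert w y) (by simp [hvw.symm, hv])
  have h2 := hc (y.erase w) (by simp [hv])
  calc
    _ ≤ (loss G lam v w * condProb G lam w y) * (c * ρ (insert w y) + c * ρ (y.erase w)) :=
      mul_le_mul (condProb_insert_le G hl hvw hv) (add_le_add h1 h2)
        (add_nonneg (hρ _) (hρ _))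
        (mul_nonneg (zero_le_one.trans (one_le_loss G hl v w)) (condProb_nonneg G hl w y))
    _ = _ := by ring

/-! ### The scan -/

lemma scan_nonneg (G : SimpleGraph V) {lam : V → ℝ} (hl : ∀ v, 0 < lam v) (l : List V)
    {ρ : Finset V → ℝ} (hρ : ∀ y, 0 ≤ ρ y) (y : Finset V) :
    0 ≤ scanDist (hardcore G lam) l ρ y := by
  induction l generalizing ρ with
  | nil => exact hρ y
  | cons w l ih => exact ih (step_nonneg G hl w hρ)

lemma scan_other (G : SimpleGraph V) {lam : V → ℝ} (hl : ∀ v, 0 < lam v) {v : V} (l : List V)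
    (hvl : v ∉ l) {ρ : Finset V → ℝ} (hρ : ∀ y, 0 ≤ ρ y) {c : ℝ}
    (hc : ∀ y, v ∉ y → ρ (insert v y) ≤ c * ρ y) {y : Finset V} (hv : v ∉ y) :
    scanDist (hardcore G lam) l ρ (insert v y) ≤
      ((l.map (loss G lam v)).prod * c) * scanDist (hardcore G lam) l ρ y := by
  induction l generalizing ρ c with
  | nil => simpa [scanDist] using hc y hv
  | cons w l ih =>
    rw [List.mem_cons, not_or] at hvl
    have := ih hvl.2 (step_nonneg G hl w hρ)
      (fun z hz => step_other G hl (Ne.symm hvl.1) hρ hc hz)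
    rw [List.map_cons, List.prod_cons]
    calc
      _ ≤ _ := this
      _ = _ := by
        rw [show scanDist (hardcore G lam) (w :: l) ρ =
          scanDist (hardcore G lam) l (stepDist ρ (siteUpdate (hardcore G lam) w)) from rfl]
        ring

/-! ### The total loss -/

/-- With `k = Δ - 2`, the left side is `(1 + 1/k)^k * (1 + 1/k) * (1 + 2/k)`. -/
lemma mul_hcCrit_le {Δ : ℕ} (hΔ : 3 ≤ Δ) : (Δ : ℝ) * hcCrit Δ ≤ 6 * Real.exp 1 := by
  obtain ⟨k, rfl⟩ : ∃ k, Δ = k + 2 := ⟨Δ - 2, by omega⟩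
  have hk : (1 : ℝ) ≤ k := by exact_mod_cast (by omega : 1 ≤ k)
  have hk0 : (0 : ℝ) < k := by linarith
  have e1 : ((k + 2 : ℕ) : ℝ) * hcCrit (k + 2) =
      (1 / k + 1 : ℝ) ^ k * ((1 + 1 / k) * (1 + 2 / k)) := by
    unfold hcCrit
    rw [show k + 2 - 1 = k + 1 by omega, show (1 / k + 1 : ℝ) = (k + 1) / k by field_simp; ring,
      div_pow]
    push_cast
    rw [show (k : ℝ) + 2 - 1 = k + 1 by ring, show (k : ℝ) + 2 - 2 = k by ring]
    field_simp
    ring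
  have e2 : (1 / k + 1 : ℝ) ^ k ≤ Real.exp 1 := by
    calc (1 / k + 1 : ℝ) ^ k ≤ Real.exp (1 / k) ^ k :=
          pow_le_pow_left₀ (by positivity) (Real.add_one_le_exp _) k
      _ = Real.exp 1 := by
          rw [← Real.exp_nat_mul]
          congr 1
          field_simp
  have h1 : (1 : ℝ) / k ≤ 1 := by rw [div_le_one hk0]; exact hk
  have h2 : (2 : ℝ) / k ≤ 2 := by rw [div_le_iff₀ hk0]; linarith
  have e3 : (1 + 1 / k : ℝ) * (1 + 2 / k) ≤ 2 * 3 :=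
    mul_le_mul (by linarith) (by linarith) (by positivity) (by norm_num)
  rw [e1]
  calc _ ≤ Real.exp 1 * (2 * 3) := mul_le_mul e2 e3 (by positivity) (Real.exp_pos 1).le
    _ = _ := by ring

lemma prod_loss_le (G : SimpleGraph V) [DecidableRel G.Adj] {Δ : ℕ} (hΔ : 3 ≤ Δ)
    {lam : V → ℝ} (hl : ∀ v, 0 < lam v) (hlam : ∀ v, lam v ≤ hcCrit Δ) {v : V}
    (hdeg : G.degree v ≤ Δ) {l : List V} (hnd : l.Nodup) :
    (l.map (loss G lam v)).prod ≤ Real.exp (6 * Real.exp 1) := by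
  have hcrit : 0 < hcCrit Δ := (hl v).trans_le (hlam v)
  rw [← List.prod_toFinset _ hnd]
  calc
    _ ≤ ∏ w, loss G lam v w :=
      Finset.prod_le_prod_of_subset_of_one_le (Finset.subset_univ _)
        (fun w _ => zero_le_one.trans (one_le_loss G hl v w)) (fun w _ _ => one_le_loss G hl v w)
    _ = ∏ w ∈ G.neighborFinset v, (1 + lam w) := by
      rw [← Finset.prod_subset (Finset.subset_univ (G.neighborFinset v))]
      · refine Finset.prod_congr rfl fun w hw => ?_
        rw [SimpleGraph.mem_neighborFinset] at hw
        exact if_pos hw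
      · intro w _ hw
        rw [SimpleGraph.mem_neighborFinset] at hw
        exact if_neg hw
    _ ≤ ∏ w ∈ G.neighborFinset v, Real.exp (hcCrit Δ) := by
      refine Finset.prod_le_prod (fun w _ => by linarith [hl w]) fun w _ => ?_
      linarith [hlam w, Real.add_one_le_exp (hcCrit Δ)]
    _ = Real.exp (G.degree v * hcCrit Δ) := by
      rw [Finset.prod_const, SimpleGraph.card_neighborFinset_eq_degree, ← Real.exp_nat_mul]
    _ ≤ _ := by
      refine Real.exp_le_exp.2 (le_trans ?_ (mul_hcCrit_le hΔ))
      exact mul_le_mul_of_nonneg_right (by exact_mod_cast hdeg) hcrit.le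

/-- After one pass of the systematic scan for a tree-unique hardcore
model, the resulting distribution is `C·λ_v`-bounded: `ν(σ⁺) ≤ C·λ_v·ν(σ⁻)`. -/
theorem systematic_scan_bounded :
    ∃ C : ℝ, 0 < C ∧
      ∀ (V : Type) [Fintype V] [DecidableEq V] (G : SimpleGraph V)
        [DecidableRel G.Adj] (Δ : ℕ), 3 ≤ Δ →
        (∀ v : V, G.degree v ≤ Δ) →
        ∀ lam : V → ℝ, (∀ v, 0 < lam v) → (∀ v, lam v ≤ hcCrit Δ) →
        ∀ ν₀ : Finset V → ℝ, (∀ σ, 0 ≤ ν₀ σ) → (∑ σ : Finset V, ν₀ σ) = 1 →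
          (∀ σ, ¬ IndepSet G σ → ν₀ σ = 0) →
        ∀ l : List V, l.Nodup → (∀ v : V, v ∈ l) →
        ∀ (v : V) (σm : Finset V), IndepSet G σm → v ∉ σm →
          scanDist (hardcore G lam) l ν₀ (insert v σm) ≤
            C * lam v * scanDist (hardcore G lam) l ν₀ σm := by
  refine ⟨Real.exp (6 * Real.exp 1), Real.exp_pos _, ?_⟩
  intro V _ _ G _ Δ hΔ hdeg lam hl hlam ν₀ hν _ _ l hnd hall v σm _ hv
  obtain ⟨l₁, l₂, rfl⟩ := List.append_of_mem (hall v)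
  have hnd₂ := (List.nodup_append.1 hnd).2.1
  rw [List.nodup_cons] at hnd₂
  -- The part `l₁` of the scan before `v` only contributes a nonnegative starting weight.
  have hsplit : scanDist (hardcore G lam) (l₁ ++ v :: l₂) ν₀ =
      scanDist (hardcore G lam) l₂ (stepDist (scanDist (hardcore G lam) l₁ ν₀)
        (siteUpdate (hardcore G lam) v)) := by
    simp [scanDist, List.foldl_append]
  have hρ := scan_nonneg G hl l₁ hν
  have hρ' := step_nonneg G hl v hρ
  rw [hsplit]
  refine (scan_other G hl l₂ hnd₂.1 hρ' (fun y hy => step_self G hl v hρ hy) hv).trans ?_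
  refine mul_le_mul_of_nonneg_right ?_ (scan_nonneg G hl l₂ hρ' σm)
  exact mul_le_mul_of_nonneg_right (prod_loss_le G hΔ hl hlam (hdeg v) hnd₂.2) (hl v).le
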